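/- arXiv:1707.04389 — 2 statements merged into one kernel-verified Lean document; each statement's English description precedes it below -/
import Mathlib

section
/- Let M be a connected, simply connected topological 3-manifold (a second-countable Hausdorff space in which every point has an open neighborhood homeomorphic to ℝ³), and let S ⊆ M be a compact subset homeomorphic to the 2-sphere S² that is locally flat in M. Then the complement M \ S has exactly two connected components. -/
/-!
Near each of its points, the locally flat surface `S` has two connected sides, and the indicator of
one of them, as a function to `ZMod 2`, is well defined off `S` up to adding a constant.

*At least two components.* Extending such an indicator to a function on `Sᶜ` that is locally
constant and changes its value across `S` amounts to choosing a section of the double cover of `M`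
whose fibre over `x` consists of the two germs of such functions at `x`. Since `M` is simply
connected and locally path connected, the identity of `M` lifts to this cover, so there is a global
function (`exists_global_primitive`, `exists_separating_function`). It takes two values near any
point of `S`.

*At most two components.* Let `C` be a component of `Sᶜ`. Its closure meets `S`, as otherwise `C`
would be clopen in the connected space `M`. The points of `S` adherent to `C` form a closed subset
of `S`; it is also open, because a component that comes close to a point of `S` contains one of the
two local sides there, and every nearby point of `S` is adherent to both sides. As `S` is connected,
`C` is adherent to all of `S` (`subset_closure_connectedComponentIn`), hence contains one of the two
local sides at any prescribed point of `S`.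
-/

/-- A topological space is locally Euclidean of dimension `n` if every point has an
open neighborhood homeomorphic to `ℝⁿ`. -/
def IsLocEuclidean (n : ℕ) (M : Type*) [TopologicalSpace M] : Prop :=
  ∀ x : M, ∃ U : Set M, IsOpen U ∧ x ∈ U ∧ Nonempty (U ≃ₜ EuclideanSpace ℝ (Fin n))

/-- A subset `S` of a space `M` (thought of as an `n`-manifold) is locally flat if every
point of `S` has an open neighborhood `U` in `M` and a homeomorphism `h : U ≃ₜ ℝⁿ` taking
`U ∩ S` onto `ℝⁿ⁻¹ × {0}` (the hyperplane where the last coordinate vanishes). -/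
def IsLocallyFlat {M : Type*} [TopologicalSpace M] (n : ℕ) (S : Set M) : Prop :=
  ∀ x ∈ S, ∃ U : Set M, IsOpen U ∧ x ∈ U ∧ ∃ h : U ≃ₜ EuclideanSpace ℝ (Fin n),
    ⇑h '' ((↑) ⁻¹' S) =
      {y : EuclideanSpace ℝ (Fin n) | ∀ i : Fin n, (i : ℕ) = n - 1 → y i = 0}

open Set Filter Topology

namespace SphereSeparation

/-! ### Functions glued over a simply connected space -/

section Gluing

variable {X F ι : Type*} [TopologicalSpace X] [TopologicalSpace F] [AddCommGroup F]
  [DiscreteTopology F]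

/-- The covering space obtained by gluing local functions. Given an open cover `U` and functions
`f i` whose differences `f i - f j` extend continuously from the dense set `D` to `U i ∩ U j`, the
discrete group `F` is glued over the `U i` along these extensions. A point over `x` with coordinate
`v` in the chart `i` stands for the germ at `x` of `f i + v`. -/
noncomputable def gluingCore (D : Set X) (hD : Dense D) (U : ι → Set X) (hU : ∀ i, IsOpen (U i))
    (idx : X → ι) (hidx : ∀ x, x ∈ U (idx x)) (f : ι → X → F)
    (hf : ∀ i j, ∀ y ∈ U i ∩ U j, ∃ c, Tendsto (f i - f j) (𝓝[D] y) (𝓝 c)) :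
    FiberBundleCore ι X F where
  baseSet := U
  isOpen_baseSet := hU
  indexAt := idx
  mem_baseSet_at := hidx
  coordChange i j x v := v + extendFrom D (f i - f j) x
  coordChange_self i x _ v := by
    have : extendFrom D (f i - f i) x = 0 :=
      extendFrom_eq (hD x) (by rw [sub_self]; exact tendsto_const_nhds)
    rw [this, add_zero]
  continuousOn_coordChange i j := by
    have h : ContinuousOn (extendFrom D (f i - f j)) (U i ∩ U j) :=
      continuousOn_extendFrom (fun x _ ↦ hD x) (hf i j)
    exact continuousOn_snd.add (h.comp continuousOn_fst fun p hp ↦ hp.1)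
  coordChange_comp i j k x hx v := by
    have h₁ := tendsto_extendFrom (hf i j x hx.1)
    have h₂ := tendsto_extendFrom (hf j k x ⟨hx.1.2, hx.2⟩)
    have h : extendFrom D (f i - f k) x =
        extendFrom D (f i - f j) x + extendFrom D (f j - f k) x :=
      extendFrom_eq (hD x) ((h₁.add h₂).congr fun z ↦ by simp)
    rw [h, add_assoc]

/-- On a simply connected, locally path connected space, let local functions `f i` have differences
that extend from the dense set `D` to continuous (so locally constant) functions. Then there is one
global function `g` whose differences with the `f i` extend in the same way: the covering space
`gluingCore` has a section, because the identity map lifts to it. -/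
theorem exists_global_primitive [SimplyConnectedSpace X] [LocallyPathConnectedSpace X]
    (D : Set X) (hD : Dense D) (U : ι → Set X) (hU : ∀ i, IsOpen (U i))
    (idx : X → ι) (hidx : ∀ x, x ∈ U (idx x)) (f : ι → X → F)
    (hf : ∀ i j, ∀ y ∈ U i ∩ U j, ∃ c, Tendsto (f i - f j) (𝓝[D] y) (𝓝 c)) :
    ∃ g : X → F, ∀ i, ∀ y ∈ U i, ∃ c, Tendsto (g - f i) (𝓝[D] y) (𝓝 c) := by
  let Z := gluingCore D hD U hU idx hidx f hf
  have cov : IsCoveringMap (Bundle.TotalSpace.proj : Z.TotalSpace → X) :=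
    FiberBundle.isCoveringMap (F := F) (E := Z.Fiber)
  obtain ⟨x₀⟩ : Nonempty X := inferInstance
  obtain ⟨s, ⟨-, hs⟩, -⟩ := cov.existsUnique_continuousMap_lifts (ContinuousMap.id X) x₀
    (⟨x₀, (0 : F)⟩ : Z.TotalSpace) rfl
  replace hs : ∀ x, (s x).proj = x := fun x ↦ congrFun hs x
  -- The coordinate of the section `s` in the chart `i`.
  let v (i : ι) (x : X) : F := (Z.localTriv i (s x)).2
  have hv (i : ι) : ContinuousOn (v i) (U i) := by
    refine continuous_snd.comp_continuousOn
      ((Z.localTriv i).continuousOn_toFun.comp s.continuous.continuousOn fun x hx ↦ ?_)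
    change (s x).proj ∈ U i
    rwa [hs]
  have hvi (i : ι) (x : X) : v i x = (show F from (s x).2) + extendFrom D (f (idx x) - f i) x := by
    change (show F from (s x).2) + extendFrom D (f (idx (s x).proj) - f i) (s x).proj = _
    rw [hs]
  refine ⟨fun x ↦ f (idx x) x + (show F from (s x).2), fun i y hy ↦ ⟨v i y, ?_⟩⟩
  refine (((hv i).continuousAt ((hU i).mem_nhds hy)).mono_left nhdsWithin_le_nhds).congr' ?_
  filter_upwards [self_mem_nhdsWithin, mem_nhdsWithin_of_mem_nhds ((hU i).mem_nhds hy)]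
    with z hzD hzU
  -- As `z ∈ D`, the limit along `𝓝[D] z` is the value at `z`.
  have h₁ := tendsto_extendFrom (hf (idx z) i z ⟨hidx z, hzU⟩)
  rw [nhds_discrete, tendsto_pure] at h₁
  have h₂ : f (idx z) z - f i z = extendFrom D (f (idx z) - f i) z :=
    h₁.self_of_nhdsWithin hzD
  rw [hvi, ← h₂]
  simp only [Pi.sub_apply]
  abel

end Gluing

/-! ### The two sides of a hypersurface -/

section Local

variable {M : Type*} [TopologicalSpace M]

/-- The set `S` cuts the open set `W` into two disjoint open sides `A` and `B`, and every
point of `S` in `W` is adherent to both sides. Connectedness of the sides is not part of the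
notion, so that `W = A = Sᶜ`, `B = ∅` is allowed. -/
structure IsSplit (S W A B : Set M) : Prop where
  isOpen : IsOpen W
  isOpen_left : IsOpen A
  isOpen_right : IsOpen B
  disjoint : Disjoint A B
  union_eq : A ∪ B = W \ S
  subset_left : W ∩ S ⊆ closure A
  subset_right : W ∩ S ⊆ closure B

namespace IsSplit

variable {S W A B : Set M}

theorem left_subset (h : IsSplit S W A B) : A ⊆ W \ S := h.union_eq ▸ subset_union_left

theorem right_subset (h : IsSplit S W A B) : B ⊆ W \ S := h.union_eq ▸ subset_union_right

theorem frequently_left (h : IsSplit S W A B) {y : M} (hy : y ∈ W ∩ S) :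
    ∃ᶠ z in 𝓝[Sᶜ] y, z ∈ A := by
  have h₁ := mem_closure_iff_frequently.1 (h.subset_left hy)
  rw [frequently_nhdsWithin_iff]
  exact h₁.mono fun z hz ↦ ⟨hz, (h.left_subset hz).2⟩

theorem frequently_right (h : IsSplit S W A B) {y : M} (hy : y ∈ W ∩ S) :
    ∃ᶠ z in 𝓝[Sᶜ] y, z ∈ B := by
  have h₁ := mem_closure_iff_frequently.1 (h.subset_right hy)
  rw [frequently_nhdsWithin_iff]
  exact h₁.mono fun z hz ↦ ⟨hz, (h.right_subset hz).2⟩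

end IsSplit

open Classical in
/-- The mod 2 indicator function of a side `A`. -/
noncomputable def side (A : Set M) (z : M) : ZMod 2 := if z ∈ A then 1 else 0

theorem side_of_mem {α : Type*} {A : Set α} {z : α} (h : z ∈ A) : side A z = 1 := if_pos h

theorem side_of_notMem {α : Type*} {A : Set α} {z : α} (h : z ∉ A) : side A z = 0 := if_neg h

/-- Off `S`, the indicator of a side is locally constant. -/
theorem IsSplit.eventually_side_eq {S W A B : Set M} (h : IsSplit S W A B) {y : M}
    (hy : y ∈ W \ S) : ∀ᶠ z in 𝓝 y, side A z = side A y := by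
  rw [← h.union_eq] at hy
  rcases hy with hy | hy
  · filter_upwards [h.isOpen_left.mem_nhds hy] with z hz
    rw [side_of_mem hz, side_of_mem hy]
  · filter_upwards [h.isOpen_right.mem_nhds hy] with z hz
    rw [side_of_notMem (h.disjoint.notMem_of_mem_right hz),
      side_of_notMem (h.disjoint.notMem_of_mem_right hy)]

/-- Two ways of labelling the sides of `S` near a point of `S` agree up to a constant: if the
sides `A'`, `B'` of the smaller neighbourhood are connected, then they lie in opposite sides of the
larger one, so the two indicators either coincide or are swapped. -/
theorem IsSplit.side_eq {S W A B W' A' B' : Set M} (h : IsSplit S W A B)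
    (h' : IsSplit S W' A' B') (hW : W' ⊆ W) (hA' : IsPreconnected A') (hB' : IsPreconnected B')
    {y : M} (hy : y ∈ W' ∩ S) :
    ∃ c, ∀ z ∈ W' \ S, side A z = c + side A' z := by
  have hsub : A' ∪ B' ⊆ A ∪ B := by
    rw [h.union_eq, h'.union_eq]
    exact sdiff_subset_sdiff_left hW
  have hmeet {P : Set M} (hP : y ∈ closure P) (hPS : P ⊆ W \ S) :
      (P ∩ (A' ∪ B')).Nonempty := by
    obtain ⟨z, hzW, hzP⟩ := mem_closure_iff.1 hP W' h'.isOpen hy.1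
    exact ⟨z, hzP, h'.union_eq ▸ ⟨hzW, (hPS hzP).2⟩⟩
  obtain ⟨a, haA, ha⟩ := hmeet (h.subset_left ⟨hW hy.1, hy.2⟩) h.left_subset
  obtain ⟨b, hbB, hb⟩ := hmeet (h.subset_right ⟨hW hy.1, hy.2⟩) h.right_subset
  have key {P : Set M} (hP : P ⊆ B) {z : M} (hz : z ∈ P) : z ∉ A :=
    h.disjoint.notMem_of_mem_right (hP hz)
  have key' {z : M} (hz : z ∈ B') : z ∉ A' := h'.disjoint.notMem_of_mem_right hz
  rcases hA'.subset_or_subset h.isOpen_left h.isOpen_right h.disjoint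
    (subset_union_left.trans hsub) with hA | hA <;>
  rcases hB'.subset_or_subset h.isOpen_left h.isOpen_right h.disjoint
    (subset_union_right.trans hsub) with hB | hB
  · exact (h.disjoint.notMem_of_mem_left (union_subset hA hB hb) hbB).elim
  · refine ⟨0, fun z hz ↦ ?_⟩
    rw [← h'.union_eq] at hz
    rcases hz with hz | hz
    · rw [side_of_mem (hA hz), side_of_mem hz, zero_add]
    · rw [side_of_notMem (key hB hz), side_of_notMem (key' hz), zero_add]
  · refine ⟨1, fun z hz ↦ ?_⟩
    rw [← h'.union_eq] at hz
    rcases hz with hz | hz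
    · rw [side_of_notMem (key hA hz), side_of_mem hz]; decide
    · rw [side_of_mem (hB hz), side_of_notMem (key' hz), add_zero]
  · exact (h.disjoint.notMem_of_mem_left haA (union_subset hA hB ha)).elim

end Local

/-! ### Half balls -/

section Euclidean

/-- The sign of `ε` selects the half of the ball above or below the hyperplane `v k = 0`. -/
theorem isPreconnected_ball_inter_sign {n : ℕ} (p : EuclideanSpace ℝ (Fin n)) (r : ℝ) (k : Fin n)
    (ε : ℝ) : IsPreconnected (Metric.ball p r ∩ {v | 0 < ε * v k}) := by
  refine ((convex_ball p r).inter ?_).isPreconnected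
  intro v hv w hw a b ha hb hab
  simp only [mem_ofPred_eq, PiLp.add_apply, PiLp.smul_apply, smul_eq_mul] at *
  have : ε * (a * v k + b * w k) = a * (ε * v k) + b * (ε * w k) := by ring
  rw [this]
  rcases ha.eq_or_lt with rfl | ha
  · have : b = 1 := by linarith
    subst this; linarith
  · have := mul_pos ha hv
    have := mul_nonneg hb hw.le
    linarith

theorem mem_closure_ball_inter_sign {n : ℕ} {p q : EuclideanSpace ℝ (Fin n)} {r : ℝ} {k : Fin n}
    {ε : ℝ} (hε : ε ≠ 0) (hq : q ∈ Metric.ball p r) (hqk : q k = 0) :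
    q ∈ closure (Metric.ball p r ∩ {v | 0 < ε * v k}) := by
  -- Approach `q` along the direction of the `k`-th axis that `ε` points to.
  let γ : ℝ → EuclideanSpace ℝ (Fin n) := fun t ↦ q + t • EuclideanSpace.single k ε
  have hγ : Continuous γ := by fun_prop
  have h0 : γ 0 = q := by simp [γ]
  have hlim : Tendsto γ (𝓝[>] 0) (𝓝 q) := by
    have := hγ.tendsto 0
    rw [h0] at this
    exact this.mono_left nhdsWithin_le_nhds
  refine mem_closure_of_tendsto hlim ?_
  filter_upwards [hlim (Metric.isOpen_ball.mem_nhds hq), self_mem_nhdsWithin] with t ht ht0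
  refine ⟨ht, ?_⟩
  have h : ε * γ t k = t * (ε * ε) := by simp [γ, hqk]; ring
  change 0 < ε * γ t k
  rw [h]
  exact mul_pos ht0 (mul_self_pos.2 hε)

end Euclidean

/-! ### Locally flat surfaces -/

section Flat

variable {M : Type*} [TopologicalSpace M] {S : Set M}

/-- Local flatness provides, around each point of `S`, arbitrarily small neighbourhoods that
`S` cuts into two connected sides: the images under a flattening chart of small open balls and
their two halves. -/
theorem exists_isSplit (hS : IsLocallyFlat 3 S) {y : M} (hy : y ∈ S) {N : Set M} (hN : N ∈ 𝓝 y) :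
    ∃ W A B, W ⊆ N ∧ y ∈ W ∧ IsPreconnected A ∧ IsPreconnected B ∧ IsSplit S W A B := by
  obtain ⟨U, hU, hyU, h, hh⟩ := hS y hy
  let φ : EuclideanSpace ℝ (Fin 3) → M := fun v ↦ (h.symm v : M)
  have hφ : IsOpenEmbedding φ := hU.isOpenEmbedding_subtypeVal.comp h.symm.isOpenEmbedding
  have hφS (v) : φ v ∈ S ↔ v 2 = 0 := by
    have h₁ : v ∈ (⇑h '' ((↑) ⁻¹' S)) ↔ φ v ∈ S := by
      rw [h.image_eq_preimage_symm]
      rfl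
    rw [← h₁, hh]
    constructor
    · intro hv
      exact hv 2 rfl
    · intro hv i hi
      obtain rfl : i = 2 := Fin.ext hi
      exact hv
  let p := h ⟨y, hyU⟩
  have hp : φ p = y := by simp [φ, p]
  obtain ⟨r, hr, hball⟩ := Metric.mem_nhds_iff.1
    (hφ.continuous.continuousAt.preimage_mem_nhds (hp.symm ▸ hN : N ∈ 𝓝 (φ p)))
  let H (ε : ℝ) : Set (EuclideanSpace ℝ (Fin 3)) := Metric.ball p r ∩ {v | 0 < ε * v 2}
  have hHo (ε : ℝ) : IsOpen (φ '' H ε) := by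
    refine hφ.isOpenMap _ (Metric.isOpen_ball.inter (isOpen_lt ?_ ?_)) <;> fun_prop
  have hHc (ε : ℝ) : IsPreconnected (φ '' H ε) :=
    (isPreconnected_ball_inter_sign p r 2 ε).image _ hφ.continuous.continuousOn
  have hcl {ε : ℝ} (hε : ε ≠ 0) : φ '' Metric.ball p r ∩ S ⊆ closure (φ '' H ε) := by
    rintro _ ⟨⟨v, hv, rfl⟩, hvS⟩
    exact image_closure_subset_closure_image hφ.continuous
      ⟨v, mem_closure_ball_inter_sign hε hv ((hφS v).1 hvS), rfl⟩
  refine ⟨φ '' Metric.ball p r, φ '' H 1, φ '' H (-1), image_subset_iff.2 hball,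
    ⟨p, Metric.mem_ball_self hr, hp⟩, hHc _, hHc _, hφ.isOpenMap _ Metric.isOpen_ball, hHo _, hHo _,
    ?_, ?_, hcl one_ne_zero, hcl (by norm_num)⟩
  · refine (disjoint_image_iff hφ.injective).2 (disjoint_left.2 fun v hv hv' ↦ ?_)
    have h₁ : 0 < 1 * v 2 := hv.2
    have h₂ : 0 < -1 * v 2 := hv'.2
    linarith
  · rw [← image_union]
    ext z
    constructor
    · rintro ⟨v, hv, rfl⟩
      refine ⟨⟨v, hv.elim And.left And.left, rfl⟩, fun hvS ↦ ?_⟩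
      rw [hφS] at hvS
      rcases hv with ⟨-, hv⟩ | ⟨-, hv⟩ <;> simp [hvS] at hv
    · rintro ⟨⟨v, hv, rfl⟩, hvS⟩
      rw [hφS] at hvS
      refine ⟨v, ?_, rfl⟩
      rcases lt_or_gt_of_ne hvS with h₀ | h₀
      · exact .inr ⟨hv, show 0 < -1 * v 2 by linarith⟩
      · exact .inl ⟨hv, show 0 < 1 * v 2 by linarith⟩

theorem dense_compl (hS : IsLocallyFlat 3 S) : Dense Sᶜ := by
  intro y
  by_cases hy : y ∈ S
  · obtain ⟨W, A, B, -, hyW, -, -, h⟩ := exists_isSplit hS hy univ_mem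
    exact closure_mono (h.left_subset.trans fun _ hz ↦ hz.2) (h.subset_left ⟨hyW, hy⟩)
  · exact subset_closure hy

/-- There is a locally constant function on `Sᶜ`, glued from the indicators of local sides, that
is not constant as soon as `S` has a point: close to that point it takes different values on the
two local sides. It plays the role of the mod 2 count of crossings of `S`. -/
theorem exists_separating_function [SimplyConnectedSpace M] [LocallyPathConnectedSpace M]
    (hS : IsLocallyFlat 3 S) (hcl : IsClosed S) :
    ∃ g : M → ZMod 2, ContinuousOn g Sᶜ ∧ ∀ y ∈ S, ∃ a ∈ Sᶜ, ∃ b ∈ Sᶜ, g a ≠ g b := by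
  -- Charts: all neighbourhoods cut by `S`, with `Sᶜ` itself serving for the points off `S`.
  let ι := {T : Set M × Set M × Set M // IsSplit S T.1 T.2.1 T.2.2}
  have hidx (x : M) : ∃ i : ι, x ∈ i.1.1 := by
    by_cases hx : x ∈ S
    · obtain ⟨W, A, B, -, hxW, -, -, h⟩ := exists_isSplit hS hx univ_mem
      exact ⟨⟨(W, A, B), h⟩, hxW⟩
    · exact ⟨⟨(Sᶜ, Sᶜ, ∅), hcl.isOpen_compl, hcl.isOpen_compl, isOpen_empty, disjoint_empty _,
        by simp [sdiff_eq], by simp, by simp⟩, hx⟩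
  choose idx hidx using hidx
  obtain ⟨g, hg⟩ := exists_global_primitive Sᶜ (dense_compl hS) (fun i : ι ↦ i.1.1)
    (fun i ↦ i.2.isOpen) idx hidx (fun i ↦ side i.1.2.1) (by
      intro i j y hy
      simp only [nhds_discrete, tendsto_pure, Pi.sub_apply]
      by_cases hyS : y ∈ S
      · obtain ⟨W, A, B, hW, hyW, hA, hB, h⟩ := exists_isSplit hS hyS
          ((i.2.isOpen.inter j.2.isOpen).mem_nhds hy)
        obtain ⟨c, hc⟩ := i.2.side_eq h (hW.trans inter_subset_left) hA hB ⟨hyW, hyS⟩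
        obtain ⟨d, hd⟩ := j.2.side_eq h (hW.trans inter_subset_right) hA hB ⟨hyW, hyS⟩
        refine ⟨c - d, ?_⟩
        filter_upwards [self_mem_nhdsWithin, mem_nhdsWithin_of_mem_nhds (h.isOpen.mem_nhds hyW)]
          with z hzS hzW
        rw [hc z ⟨hzW, hzS⟩, hd z ⟨hzW, hzS⟩]
        abel
      · refine ⟨side i.1.2.1 y - side j.1.2.1 y, nhdsWithin_le_nhds ?_⟩
        filter_upwards [i.2.eventually_side_eq ⟨hy.1, hyS⟩, j.2.eventually_side_eq ⟨hy.2, hyS⟩]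
          with z h₁ h₂
        rw [h₁, h₂])
  simp only [nhds_discrete, tendsto_pure, Pi.sub_apply] at hg
  refine ⟨g, fun y hy ↦ ?_, fun y hy ↦ ?_⟩
  · obtain ⟨c, hc⟩ := hg (idx y) y (hidx y)
    rw [ContinuousWithinAt, nhds_discrete, tendsto_pure]
    filter_upwards [hc, nhdsWithin_le_nhds ((idx y).2.eventually_side_eq ⟨hidx y, hy⟩)] with z h₁ h₂
    have h₃ := hc.self_of_nhdsWithin hy
    rw [h₂] at h₁
    exact sub_left_injective (h₁.trans h₃.symm)
  · obtain ⟨c, hc⟩ := hg (idx y) y (hidx y)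
    have hsp := (idx y).2
    obtain ⟨a, ha, hac⟩ := ((hsp.frequently_left ⟨hidx y, hy⟩).and_eventually hc).exists
    obtain ⟨b, hb, hbc⟩ := ((hsp.frequently_right ⟨hidx y, hy⟩).and_eventually hc).exists
    refine ⟨a, (hsp.left_subset ha).2, b, (hsp.right_subset hb).2, fun hab ↦ ?_⟩
    rw [side_of_mem ha] at hac
    rw [side_of_notMem (hsp.disjoint.notMem_of_mem_right hb)] at hbc
    rw [hab, ← hbc] at hac
    exact absurd (sub_right_injective hac) (by decide)

theorem mk_eq_mk_of_isPreconnected {P : Set M} (hP : IsPreconnected P) (hPS : P ⊆ Sᶜ) {x y : M}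
    (hx : x ∈ P) (hy : y ∈ P) :
    (ConnectedComponents.mk ⟨x, hPS hx⟩ : ConnectedComponents ↥Sᶜ) =
      ConnectedComponents.mk ⟨y, hPS hy⟩ := by
  rw [ConnectedComponents.coe_eq_coe']
  have h := hP.subset_connectedComponentIn hy hPS hx
  rw [connectedComponentIn_eq_image (hPS hy)] at h
  obtain ⟨w, hw, hwx⟩ := h
  rwa [← Subtype.ext (a1 := w) (a2 := ⟨x, hPS hx⟩) hwx]

/-- Every component of the complement is adherent to all of `S`. -/
theorem subset_closure_connectedComponentIn [ConnectedSpace M] [LocallyConnectedSpace M]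
    (hS : IsLocallyFlat 3 S) (hcl : IsClosed S) (hconn : IsConnected S) {z : M} (hz : z ∈ Sᶜ) :
    S ⊆ closure (connectedComponentIn Sᶜ z) := by
  set C := connectedComponentIn Sᶜ z with hC
  have hCo : IsOpen C := hcl.isOpen_compl.connectedComponentIn
  have hzC : z ∈ C := mem_connectedComponentIn hz
  have hCS : C ⊆ Sᶜ := connectedComponentIn_subset _ _
  have hCmax {P : Set M} (hP : IsPreconnected P) (hPS : P ⊆ Sᶜ) (hPC : (P ∩ C).Nonempty) :
      P ⊆ C := by
    obtain ⟨w, hwP, hwC⟩ := hPC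
    rw [hC, connectedComponentIn_eq hwC]
    exact hP.subset_connectedComponentIn hwP hPS
  -- A component whose closure avoids `S` is clopen in `M`.
  have hne : (S ∩ closure C).Nonempty := by
    by_contra hemp
    have h₁ : closure C ⊆ Sᶜ := fun w hw hwS ↦ hemp ⟨w, hwS, hw⟩
    have h₂ : closure C ⊆ C :=
      hCmax isPreconnected_connectedComponentIn.closure h₁ ⟨z, subset_closure hzC, hzC⟩
    have h₃ : C = univ :=
      IsClopen.eq_univ ⟨closure_subset_iff_isClosed.1 h₂, hCo⟩ ⟨z, hzC⟩
    obtain ⟨s, hs⟩ := hconn.nonempty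
    exact hCS (h₃ ▸ mem_univ s) hs
  have : PreconnectedSpace S := isPreconnected_iff_preconnectedSpace.1 hconn.isPreconnected
  have hclopen : IsClopen ((↑) ⁻¹' closure C : Set S) := by
    refine ⟨isClosed_closure.preimage continuous_subtype_val, isOpen_iff_mem_nhds.2 ?_⟩
    rintro ⟨y, hyS⟩ hyC
    obtain ⟨W, A, B, -, hyW, hA, hB, h⟩ := exists_isSplit hS hyS univ_mem
    obtain ⟨w, hwW, hwC⟩ := mem_closure_iff.1 hyC W h.isOpen hyW
    have hsub : A ⊆ C ∨ B ⊆ C := by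
      have hw : w ∈ A ∪ B := h.union_eq ▸ ⟨hwW, hCS hwC⟩
      refine hw.imp (fun hw ↦ ?_) (fun hw ↦ ?_)
      · exact hCmax hA (h.left_subset.trans fun _ hz ↦ hz.2) ⟨w, hw, hwC⟩
      · exact hCmax hB (h.right_subset.trans fun _ hz ↦ hz.2) ⟨w, hw, hwC⟩
    filter_upwards [continuous_subtype_val.continuousAt.preimage_mem_nhds (h.isOpen.mem_nhds hyW)]
      with x hx
    rcases hsub with hsub | hsub
    · exact closure_mono hsub (h.subset_left ⟨hx, x.2⟩)
    · exact closure_mono hsub (h.subset_right ⟨hx, x.2⟩)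
  obtain ⟨s, hsS, hsC⟩ := hne
  have huniv := hclopen.eq_univ ⟨⟨s, hsS⟩, hsC⟩
  intro y hy
  exact (huniv ▸ mem_univ _ : (⟨y, hy⟩ : S) ∈ ((↑) ⁻¹' closure C : Set S))

end Flat

theorem _root_.IsLocEuclidean.locallyPathConnectedSpace {n : ℕ} {M : Type*} [TopologicalSpace M]
    (hM : IsLocEuclidean n M) : LocallyPathConnectedSpace M := by
  choose U hU hxU h using hM
  have e (x : M) : IsOpenEmbedding fun v ↦ (((h x).some.symm v : U x) : M) :=
    (hU x).isOpenEmbedding_subtypeVal.comp (h x).some.symm.isOpenEmbedding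
  let _ : ChartedSpace (EuclideanSpace ℝ (Fin n)) M :=
    { atlas := range fun x ↦ ((e x).toOpenPartialHomeomorph _).symm
      chartAt x := ((e x).toOpenPartialHomeomorph _).symm
      mem_chart_source x := ⟨(h x).some ⟨x, hxU x⟩, by simp⟩
      chart_mem_atlas x := ⟨x, rfl⟩ }
  exact ChartedSpace.locallyPathConnectedSpace (EuclideanSpace ℝ (Fin n)) M

end SphereSeparation

open SphereSeparation in
/-- A locally flat embedded 2-sphere in a connected, simply connected topological
3-manifold separates it into exactly two connected components. -/
theorem sphere_separates_simply_connected_three_manifold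
    (M : Type*) [TopologicalSpace M] [T2Space M] [SecondCountableTopology M]
    (hM : IsLocEuclidean 3 M) [ConnectedSpace M] [SimplyConnectedSpace M]
    (S : Set M) (hScpt : IsCompact S)
    (hShomeo : Nonempty (S ≃ₜ Metric.sphere (0 : EuclideanSpace ℝ (Fin 3)) 1))
    (hSflat : IsLocallyFlat 3 S) :
    Nat.card (ConnectedComponents ↥(Sᶜ)) = 2 := by
  have : LocallyPathConnectedSpace M := hM.locallyPathConnectedSpace
  have hcl : IsClosed S := hScpt.isClosed
  have hconn : IsConnected S := by
    obtain ⟨e⟩ := hShomeo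
    have h₁ : IsConnected (Metric.sphere (0 : EuclideanSpace ℝ (Fin 3)) 1) :=
      isConnected_sphere (by simp [rank_eq_card_basis (EuclideanSpace.basisFun (Fin 3) ℝ).toBasis])
        0 zero_le_one
    rw [isConnected_iff_connectedSpace] at h₁ ⊢
    exact e.symm.surjective.connectedSpace e.symm.continuous
  obtain ⟨g, hg, hgS⟩ := exists_separating_function hSflat hcl
  obtain ⟨y, hy⟩ := hconn.nonempty
  obtain ⟨W, A, B, -, hyW, hA, hB, h⟩ := exists_isSplit hSflat hy univ_mem
  have hAS : A ⊆ Sᶜ := h.left_subset.trans fun _ hz ↦ hz.2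
  have hBS : B ⊆ Sᶜ := h.right_subset.trans fun _ hz ↦ hz.2
  obtain ⟨a, ha⟩ : A.Nonempty := closure_nonempty_iff.1 ⟨y, h.subset_left ⟨hyW, hy⟩⟩
  obtain ⟨b, hb⟩ : B.Nonempty := closure_nonempty_iff.1 ⟨y, h.subset_right ⟨hyW, hy⟩⟩
  have hall (x : ConnectedComponents ↥Sᶜ) :
      x = .mk ⟨a, hAS ha⟩ ∨ x = .mk ⟨b, hBS hb⟩ := by
    obtain ⟨⟨z, hz⟩, rfl⟩ := ConnectedComponents.surjective_coe x
    obtain ⟨w, hwW, hwC⟩ := mem_closure_iff.1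
      (subset_closure_connectedComponentIn hSflat hcl hconn hz hy) W h.isOpen hyW
    have hCS := connectedComponentIn_subset Sᶜ z
    rw [mk_eq_mk_of_isPreconnected isPreconnected_connectedComponentIn hCS
      (mem_connectedComponentIn hz) hwC]
    have hw : w ∈ A ∪ B := h.union_eq ▸ ⟨hwW, hCS hwC⟩
    exact hw.imp (fun hw ↦ mk_eq_mk_of_isPreconnected hA hAS hw ha)
      (fun hw ↦ mk_eq_mk_of_isPreconnected hB hBS hw hb)
  rw [Nat.card_eq_two_iff]
  refine ⟨_, _, fun hab ↦ ?_, eq_univ_of_forall hall⟩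
  -- If the two sides were in one component, the separating function would be constant on `Sᶜ`.
  let G := (continuousOn_iff_continuous_domRestrict.1 hg).connectedComponentsLift
  obtain ⟨c, hc, d, hd, hcd⟩ := hgS y hy
  refine hcd (congrArg G (?_ : ConnectedComponents.mk (⟨c, hc⟩ : ↥Sᶜ) = .mk ⟨d, hd⟩))
  rcases hall (.mk ⟨c, hc⟩) with h₁ | h₁ <;> rcases hall (.mk ⟨d, hd⟩) with h₂ | h₂ <;>
    simp only [h₁, h₂, hab]
end

section
/- Let M be a connected, simply connected topological 3-manifold, and let S ⊆ M be a compact subset homeomorphic to the 2-sphere S² that is locally flat in M, so that M \ S has exactly two connected components D and D'. Then each of D and D', with its subspace topology, is simply connected. -/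
open Set Topology Metric Filter

local notation "E3" => EuclideanSpace ℝ (Fin 3)

/-! ### Extending maps into the 2-sphere -/

/-- A map to `ℝ³` on a plane can be changed to a nowhere vanishing map without changing it
where it has norm at least one. -/
lemma exists_nonvanishing (F : ℝ × ℝ → E3) (hF : Continuous F) :
    ∃ G : ℝ × ℝ → E3, Continuous G ∧ (∀ z, G z ≠ 0) ∧ ∀ z, 1 ≤ ‖F z‖ → G z = F z := by
  obtain ⟨g, hg, hgF, -⟩ := hF.exists_contDiff_approx (n := 1) (ε := fun _ => 1 / 4)
    continuous_const (fun _ => by norm_num)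
  have hd : Dense (range g)ᶜ := hg.dense_compl_range_of_finrank_lt_finrank (by simp)
  obtain ⟨c, hc, hcb⟩ := hd.exists_mem_open (isOpen_ball (x := (0 : E3)) (ε := 1 / 4))
    ⟨0, by simp⟩
  have hcn : ‖c‖ < 1 / 4 := by simpa using hcb
  have hclose : ∀ z, ‖g z - c - F z‖ < 1 / 2 := fun z => by
    have h1 : ‖g z - F z‖ < 1 / 4 := by simpa [dist_eq_norm] using hgF z
    have h2 : g z - c - F z = (g z - F z) - c := by abel
    rw [h2]
    linarith [norm_sub_le (g z - F z) c]
  -- The weight of the approximation: `1` where `‖F z‖ ≤ 1 / 2`, and `0` where `1 ≤ ‖F z‖`.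
  let w : ℝ × ℝ → ℝ := fun z => max 0 (min 1 (2 - 2 * ‖F z‖))
  refine ⟨fun z => F z + w z • (g z - c - F z), ?_, fun z h0 => ?_, fun z hz => ?_⟩
  · have := hg.continuous
    fun_prop
  · have hw0 : 0 ≤ w z := le_max_left _ _
    have hw1 : w z ≤ 1 := max_le zero_le_one (min_le_left _ _)
    rcases le_or_gt ‖F z‖ (1 / 2) with h | h
    · have hw : w z = 1 := by
        simp only [w]
        rw [min_eq_left (by linarith), max_eq_right zero_le_one]
      refine hc ⟨z, ?_⟩
      simp only [hw, one_smul, add_sub_cancel] at h0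
      exact sub_eq_zero.mp h0
    · have h3 : ‖F z‖ = ‖w z • (g z - c - F z)‖ := by
        have h4 := congrArg norm (eq_neg_of_add_eq_zero_left h0)
        rwa [norm_neg] at h4
      rw [norm_smul, Real.norm_of_nonneg hw0] at h3
      nlinarith [hclose z, norm_nonneg (g z - c - F z)]
  · have hw : w z = 0 := max_eq_left ((min_le_right _ _).trans (by linarith))
    simp [hw]

/-- The 2-sphere is an absolute extensor for closed subsets of the square. -/
lemma exists_extension_sphere {A : Set (unitInterval × unitInterval)} (hA : IsClosed A)
    (f : A → sphere (0 : E3) 1) (hf : Continuous f) :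
    ∃ g : unitInterval × unitInterval → sphere (0 : E3) 1, Continuous g ∧ ∀ a : A, g a = f a := by
  let ι : unitInterval × unitInterval → ℝ × ℝ := Prod.map (↑) (↑)
  have hι : IsClosedEmbedding ι :=
    (isClosed_Icc.isClosedEmbedding_subtypeVal).prodMap isClosed_Icc.isClosedEmbedding_subtypeVal
  obtain ⟨F, hF⟩ := ContinuousMap.exists_extension' (hι.comp hA.isClosedEmbedding_subtypeVal)
    (⟨fun a => (f a : E3), by fun_prop⟩ : C(A, E3))
  obtain ⟨G, hG, hG0, hGF⟩ := exists_nonvanishing F F.continuous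
  refine ⟨fun z => ⟨‖G (ι z)‖⁻¹ • G (ι z), ?_⟩, ?_, fun a => ?_⟩
  · simp [norm_smul, hG0]
  · have h1 : Continuous fun z => G (ι z) := hG.comp hι.continuous
    exact ((h1.norm.inv₀ fun z => by simpa using hG0 _).smul h1).subtype_mk _
  · have h1 : F (ι a) = f a := congrFun hF a
    have h2 : ‖F (ι a)‖ = 1 := by rw [h1]; simp
    ext1
    dsimp only
    rw [hGF _ h2.ge, h2, inv_one, one_smul, h1]

/-- The part of a map of a square outside an open set `D` can be replaced by a map into `S`, if
`S` is a 2-sphere such that `D ∪ S` is closed. -/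
lemma exists_map_into_union {M : Type*} [TopologicalSpace M] {S D : Set M} (hS : IsClosed S)
    (e : S ≃ₜ sphere (0 : E3) 1) (hD : IsOpen D) (hDS : IsClosed (D ∪ S))
    (H : unitInterval × unitInterval → M) (hH : Continuous H) :
    ∃ H' : unitInterval × unitInterval → M, Continuous H' ∧ (∀ z, H' z ∈ D ∪ S) ∧
      ∀ z, H z ∈ D → H' z = H z := by
  classical
  obtain ⟨g, hg, hgA⟩ := exists_extension_sphere (hS.preimage hH)
    (fun a : H ⁻¹' S => e ⟨H a, a.2⟩) (by fun_prop)
  refine ⟨fun z => if H z ∈ D then H z else e.symm (g z), ?_, fun z => ?_, fun z hz => if_pos hz⟩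
  · refine Continuous.if (fun z hz => ?_) hH (by fun_prop)
    have h1 : H z ∈ D ∪ S := by
      have h2 : closure {z | H z ∈ D} ⊆ H ⁻¹' (D ∪ S) :=
        closure_minimal (fun z hz => Or.inl hz) (hDS.preimage hH)
      exact h2 hz.1
    have h3 : H z ∉ D := fun h =>
      hz.2 ((hD.preimage hH).subset_interior_iff.mpr subset_rfl h)
    have h4 : H z ∈ S := h1.resolve_left h3
    rw [hgA ⟨z, h4⟩]
    simp
  · dsimp only
    split_ifs with h
    exacts [Or.inl h, Or.inr (e.symm (g z)).2]

/-! ### Flat charts -/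

/-- Local flatness in terms of an inverse chart `j : ℝ³ → M`. -/
lemma IsLocallyFlat.exists_chart {M : Type*} [TopologicalSpace M] {S : Set M}
    (h : IsLocallyFlat 3 S) {x : M} (hx : x ∈ S) :
    ∃ j : E3 → M, IsOpenEmbedding j ∧ x ∈ range j ∧ ∀ y, j y ∈ S ↔ y 2 = 0 := by
  obtain ⟨U, hU, hxU, e, he⟩ := h x hx
  refine ⟨fun y => e.symm y, hU.isOpenEmbedding_subtypeVal.comp e.symm.isOpenEmbedding,
    ⟨e ⟨x, hxU⟩, by simp⟩, fun y => ?_⟩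
  have h1 : (e.symm y : M) ∈ S ↔ y ∈ e '' ((↑) ⁻¹' S) :=
    ⟨fun h => ⟨e.symm y, h, by simp⟩, by rintro ⟨u, hu, rfl⟩; simpa using hu⟩
  rw [h1, he]
  refine ⟨fun h => h 2 rfl, fun h i hi => ?_⟩
  have : i = 2 := Fin.ext hi
  rwa [this]

lemma IsLocEuclidean.locallyPathConnectedSpace_s1 {n : ℕ} {M : Type*} [TopologicalSpace M]
    (h : IsLocEuclidean n M) : LocallyPathConnectedSpace M := by
  rw [locallyPathConnectedSpace_iff_pathComponentIn_mem_nhds]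
  intro x u hu hxu
  obtain ⟨U, hU, hxU, ⟨e⟩⟩ := h x
  let j : EuclideanSpace ℝ (Fin n) → M := fun y => e.symm y
  have hj : IsOpenEmbedding j := hU.isOpenEmbedding_subtypeVal.comp e.symm.isOpenEmbedding
  obtain ⟨y, rfl⟩ : ∃ y, j y = x := ⟨e ⟨x, hxU⟩, by simp [j]⟩
  obtain ⟨ε, hε, hb⟩ := Metric.mem_nhds_iff.mp
    ((hu.preimage hj.continuous).mem_nhds (show y ∈ j ⁻¹' u from hxu))
  have hp : IsPathConnected (j '' ball y ε) :=
    ((convex_ball y ε).isPathConnected ⟨y, mem_ball_self hε⟩).image hj.continuous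
  exact mem_of_superset (hj.image_mem_nhds.mpr (ball_mem_nhds y hε))
    (hp.subset_pathComponentIn ⟨y, mem_ball_self hε, rfl⟩ (image_subset_iff.mpr hb))

section Component

variable {M : Type*} [TopologicalSpace M] {S D : Set M} {j : E3 → M}

/-- A component of `Sᶜ` containing one point of an open half-space of a flat chart contains the
whole half-space. The sign `σ` selects the half-space. -/
lemma half_space_subset (hD : ∃ x ∈ Sᶜ, D = connectedComponentIn Sᶜ x) (hj : Continuous j)
    (hjS : ∀ y, j y ∈ S ↔ y 2 = 0) {σ : ℝ} {y : E3} (hy : 0 < σ * y 2) (hyD : j y ∈ D)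
    {z : E3} (hz : 0 < σ * z 2) : j z ∈ D := by
  obtain ⟨x, hx, rfl⟩ := hD
  have hc : Convex ℝ {y : E3 | 0 < σ * y 2} := by
    intro a ha b hb s t hs ht hst
    simp only [mem_ofPred_eq, PiLp.add_apply, PiLp.smul_apply, smul_eq_mul] at *
    rcases hs.eq_or_lt with rfl | hs
    · have : t = 1 := by linarith
      subst this; linarith
    · nlinarith [mul_pos hs ha, mul_nonneg ht hb.le]
  have hsub : j '' {y : E3 | 0 < σ * y 2} ⊆ Sᶜ := by
    rintro _ ⟨a, ha, rfl⟩ haS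
    simp [(hjS a).mp haS] at ha
  rw [connectedComponentIn_eq hyD]
  exact (hc.isPreconnected.image j hj.continuousOn).subset_connectedComponentIn
    ⟨y, hy, rfl⟩ hsub ⟨z, hz, rfl⟩

/-- If a component of `Sᶜ` has a point of a flat chart in its closure, then it contains one of the
open half-spaces of the chart. -/
lemma exists_half_space (hD : ∃ x ∈ Sᶜ, D = connectedComponentIn Sᶜ x) (hj : IsOpenEmbedding j)
    (hjS : ∀ y, j y ∈ S ↔ y 2 = 0) {y₀ : E3} (hy₀ : j y₀ ∈ closure D) :
    ∃ σ : ℝ, (σ = 1 ∨ σ = -1) ∧ ∀ z : E3, 0 < σ * z 2 → j z ∈ D := by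
  obtain ⟨_, ⟨y, rfl⟩, hy⟩ := mem_closure_iff.mp hy₀ _ hj.isOpen_range ⟨y₀, rfl⟩
  have hDS : D ⊆ Sᶜ := by
    obtain ⟨x, -, rfl⟩ := hD
    exact connectedComponentIn_subset _ _
  have hy2 : y 2 ≠ 0 := fun h => hDS hy ((hjS y).mpr h)
  rcases hy2.lt_or_gt with h | h
  · exact ⟨-1, Or.inr rfl, fun z => half_space_subset hD hj.continuous hjS (by linarith) hy⟩
  · exact ⟨1, Or.inl rfl, fun z => half_space_subset hD hj.continuous hjS (by linarith) hy⟩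

/-- A connected locally flat closed set lies in the closure of each component of its complement:
the part of it in the closure of `D` is closed, open by flatness, and nonempty since otherwise `D`
would be open and closed in `M`. -/
lemma sphere_subset_closure [ConnectedSpace M] [LocallyConnectedSpace M] (hSc : IsClosed S)
    (hSconn : IsConnected S) (hflat : IsLocallyFlat 3 S)
    (hD : ∃ x ∈ Sᶜ, D = connectedComponentIn Sᶜ x) : S ⊆ closure D := by
  have : PreconnectedSpace S := Subtype.preconnectedSpace hSconn.isPreconnected
  let A : Set S := (↑) ⁻¹' closure D
  have hA : IsClopen A := by
    refine ⟨isClosed_closure.preimage continuous_subtype_val, isOpen_iff_mem_nhds.mpr ?_⟩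
    rintro ⟨x, hx⟩ hxA
    obtain ⟨j, hj, ⟨y₀, rfl⟩, hjS⟩ := hflat.exists_chart hx
    obtain ⟨σ, hσ, hhalf⟩ := exists_half_space hD hj hjS hxA
    refine mem_of_superset (continuous_subtype_val.continuousAt.preimage_mem_nhds
      (hj.isOpen_range.mem_nhds ⟨y₀, rfl⟩)) ?_
    rintro ⟨_, hs⟩ ⟨y, rfl⟩
    -- Points of the hyperplane are approached from inside the half-space along its normal.
    have hcont : Continuous fun t : ℝ => j (y + (t * σ) • EuclideanSpace.single 2 1) :=
      hj.continuous.comp (by fun_prop)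
    have h0 : (0 : ℝ) ∈ closure (Ioi 0) := by simp
    have := map_mem_closure hcont h0 (t := D) fun t (ht : 0 < t) => hhalf _ (by
      have : y 2 = 0 := (hjS y).mp hs
      rcases hσ with rfl | rfl <;> simp [this, ht])
    simpa [A] using this
  rcases isClopen_iff.mp hA with h | h
  · exfalso
    obtain ⟨x, hx, rfl⟩ := hD
    have hclosed : IsClosed (connectedComponentIn Sᶜ x) := by
      refine isClosed_of_closure_subset fun z hz => ?_
      have hzS : z ∈ Sᶜ := fun hzS => by
        have : (⟨z, hzS⟩ : S) ∈ A := hz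
        simp [h] at this
      obtain ⟨w, hwz, hwx⟩ := mem_closure_iff.mp hz _
        (hSc.isOpen_compl.connectedComponentIn (x := z)) (mem_connectedComponentIn hzS)
      rw [connectedComponentIn_eq hwx, ← connectedComponentIn_eq hwz]
      exact mem_connectedComponentIn hzS
    have huniv := IsClopen.eq_univ ⟨hclosed, hSc.isOpen_compl.connectedComponentIn⟩
      ⟨x, mem_connectedComponentIn hx⟩
    obtain ⟨s, hs⟩ := hSconn.nonempty
    exact connectedComponentIn_subset Sᶜ x (huniv ▸ mem_univ s) hs
  · intro s hs
    have : (⟨s, hs⟩ : S) ∈ A := h ▸ mem_univ _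
    exact this

/-- Two distinct components of `Sᶜ` are disjoint. -/
lemma disjoint_components {D' : Set M} (hD : ∃ x ∈ Sᶜ, D = connectedComponentIn Sᶜ x)
    (hD' : ∃ x ∈ Sᶜ, D' = connectedComponentIn Sᶜ x) (hne : D ≠ D') : Disjoint D D' := by
  obtain ⟨x, -, rfl⟩ := hD
  obtain ⟨x', -, rfl⟩ := hD'
  rw [Set.disjoint_left]
  intro z hz hz'
  exact hne ((connectedComponentIn_eq hz).trans (connectedComponentIn_eq hz').symm)

/-- If two different components of `Sᶜ` accumulate at a point of `S`, each of them is exactly one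
open half-space in a flat chart around the point. -/
lemma exists_sign {D' : Set M} (hD : ∃ x ∈ Sᶜ, D = connectedComponentIn Sᶜ x)
    (hD' : ∃ x ∈ Sᶜ, D' = connectedComponentIn Sᶜ x) (hne : D ≠ D') (hj : IsOpenEmbedding j)
    (hjS : ∀ y, j y ∈ S ↔ y 2 = 0) {y₀ : E3} (h : j y₀ ∈ closure D) (h' : j y₀ ∈ closure D') :
    ∃ σ : ℝ, (σ = 1 ∨ σ = -1) ∧ ∀ z : E3, j z ∈ D ↔ 0 < σ * z 2 := by
  obtain ⟨σ, hσ, hin⟩ := exists_half_space hD hj hjS h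
  obtain ⟨σ', hσ', hin'⟩ := exists_half_space hD' hj hjS h'
  have hdisj := Set.disjoint_left.mp (disjoint_components hD hD' hne)
  refine ⟨σ, hσ, fun z => ⟨fun hz => ?_, hin z⟩⟩
  have hz2 : z 2 ≠ 0 := fun h0 => by
    obtain ⟨x, -, rfl⟩ := hD
    exact connectedComponentIn_subset _ _ hz ((hjS z).mpr h0)
  have hne' : σ' ≠ σ := by
    rintro rfl
    have hp : 0 < σ' * (EuclideanSpace.single (2 : Fin 3) σ' : E3) 2 := by
      rcases hσ with rfl | rfl <;> simp
    exact hdisj (hin _ hp) (hin' _ hp)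
  by_contra hlt
  refine hdisj hz (hin' z ?_)
  rcases hσ with rfl | rfl <;> rcases hσ' with rfl | rfl
  · exact absurd rfl hne'
  · have := lt_of_le_of_ne (not_lt.mp hlt) (by simpa using hz2)
    linarith
  · have := lt_of_le_of_ne (not_lt.mp hlt) (by simpa using hz2)
    linarith
  · exact absurd rfl hne'

/-! ### Pushing the sphere into a component -/

/-- A self-map of a chart which is the identity off a compact set extends continuously by the
identity. -/
lemma continuous_extend_id [T2Space M] (hj : IsOpenEmbedding j) {p : E3 → E3} (hp : Continuous p)
    {K : Set E3} (hK : IsCompact K) (hpK : ∀ y ∉ K, p y = y) :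
    Continuous (Function.extend j (j ∘ p) id) := by
  rw [continuous_iff_continuousAt]
  intro z
  by_cases hz : z ∈ j '' K
  · obtain ⟨y, -, rfl⟩ := hz
    rw [← hj.continuousAt_iff]
    have : Function.extend j (j ∘ p) id ∘ j = j ∘ p :=
      funext fun y => hj.injective.extend_apply _ _ _
    rw [this]
    exact (hj.continuous.comp hp).continuousAt
  · refine continuousAt_id.congr ?_
    filter_upwards [(hK.image hj.continuous).isClosed.isOpen_compl.mem_nhds hz] with w hw
    by_cases hr : w ∈ range j
    · obtain ⟨y, rfl⟩ := hr
      rw [hj.injective.extend_apply, Function.comp_apply, hpK y fun h => hw ⟨y, h, rfl⟩, id]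
    · rw [Function.extend_apply' _ _ _ fun ⟨y, hy⟩ => hr ⟨y, hy⟩]

/-- Near a point of `S` with a flat chart in which `D` is an open half-space, `S` can be pushed
into `D` by a map preserving `D` and fixing a closed set `C` disjoint from `S`. -/
lemma exists_local_push [T2Space M] (hj : IsOpenEmbedding j) (hjS : ∀ y, j y ∈ S ↔ y 2 = 0)
    {σ : ℝ} (hσ : σ = 1 ∨ σ = -1) (hjD : ∀ y, j y ∈ D ↔ 0 < σ * y 2)
    {C : Set M} (hC : IsClosed C) {y₀ : E3} (hy₀ : j y₀ ∉ C) :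
    ∃ φ : M → M, Continuous φ ∧ (∀ z ∈ D, φ z ∈ D) ∧ (∀ z ∈ C, φ z = z) ∧
      (∀ s ∈ S, φ s = s ∨ φ s ∈ D) ∧ ∃ V ∈ 𝓝 (j y₀), ∀ s ∈ S ∩ V, φ s ∈ D := by
  have hC' : j ⁻¹' Cᶜ ∈ 𝓝 y₀ := (hC.isOpen_compl.preimage hj.continuous).mem_nhds hy₀
  obtain ⟨r, hr, hrC⟩ := Metric.mem_nhds_iff.mp hC'
  let ρ : E3 → ℝ := fun y => max 0 (r - dist y y₀)
  have hρ0 : ∀ y, 0 ≤ ρ y := fun y => le_max_left _ _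
  let p : E3 → E3 := fun y => y + (σ * ρ y) • EuclideanSpace.single 2 1
  have hpid : ∀ y, ρ y = 0 → p y = y := fun y h => by simp [p, h]
  have hp2 : ∀ y, σ * p y 2 = σ * y 2 + ρ y := fun y => by
    rcases hσ with rfl | rfl <;> (simp [p]; try ring)
  have hφj : ∀ y, Function.extend j (j ∘ p) id (j y) = j (p y) := fun y =>
    hj.injective.extend_apply _ _ _
  have hφ' : ∀ z ∉ range j, Function.extend j (j ∘ p) id z = z := fun z hz =>
    Function.extend_apply' _ _ _ fun ⟨y, hy⟩ => hz ⟨y, hy⟩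
  refine ⟨Function.extend j (j ∘ p) id, ?_, fun z hz => ?_, fun z hz => ?_, fun s hs => ?_,
    j '' ball y₀ r, hj.image_mem_nhds.mpr (ball_mem_nhds y₀ hr), ?_⟩
  · refine continuous_extend_id hj (by fun_prop) (isCompact_closedBall y₀ r) fun y hy => ?_
    rw [mem_closedBall, not_le] at hy
    exact hpid y (max_eq_left (by linarith))
  · by_cases hz' : z ∈ range j
    · obtain ⟨y, rfl⟩ := hz'
      rw [hφj, hjD, hp2]
      linarith [(hjD y).mp hz, hρ0 y]
    · rwa [hφ' z hz']
  · by_cases hz' : z ∈ range j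
    · obtain ⟨y, rfl⟩ := hz'
      have hy : r ≤ dist y y₀ := not_lt.mp fun h => hrC (mem_ball.mpr h) hz
      rw [hφj, hpid y (max_eq_left (by linarith))]
    · exact hφ' z hz'
  · by_cases hs' : s ∈ range j
    · obtain ⟨y, rfl⟩ := hs'
      rw [hφj, hjD, hp2, (hjS y).mp hs]
      rcases (hρ0 y).eq_or_lt with h | h
      · exact Or.inl (by rw [hpid y h.symm])
      · exact Or.inr (by linarith)
    · exact Or.inl (hφ' s hs')
  · rintro _ ⟨hs, y, hy, rfl⟩
    rw [hφj, hjD, hp2, (hjS y).mp hs]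
    have : 0 < ρ y := lt_max_of_lt_right (by linarith [mem_ball.mp hy])
    linarith

/-- A compact locally flat `S` in the common boundary of two components of `Sᶜ` can be pushed into
either of them, fixing a given closed set disjoint from `S`. -/
lemma exists_push [T2Space M] {D' : Set M} (hS : IsCompact S) (hflat : IsLocallyFlat 3 S)
    (hD : ∃ x ∈ Sᶜ, D = connectedComponentIn Sᶜ x)
    (hD' : ∃ x ∈ Sᶜ, D' = connectedComponentIn Sᶜ x) (hne : D ≠ D')
    (hSD : S ⊆ closure D) (hSD' : S ⊆ closure D') {C : Set M} (hC : IsClosed C) (hCS : C ⊆ Sᶜ) :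
    ∃ φ : M → M, Continuous φ ∧ (∀ z ∈ D ∪ S, φ z ∈ D) ∧ ∀ z ∈ C, φ z = z := by
  -- The clause `φ s = s ∨ φ s ∈ D` makes the construction stable under composition: a point of `S`
  -- which has not yet been pushed into `D` is still at its original place.
  have key : ∃ φ : M → M, Continuous φ ∧ (∀ z ∈ D, φ z ∈ D) ∧ (∀ z ∈ C, φ z = z) ∧
      (∀ s ∈ S, φ s = s ∨ φ s ∈ D) ∧ ∀ s ∈ S ∩ S, φ s ∈ D := by
    refine hS.induction_on (p := fun T => ∃ φ : M → M, Continuous φ ∧ (∀ z ∈ D, φ z ∈ D) ∧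
      (∀ z ∈ C, φ z = z) ∧ (∀ s ∈ S, φ s = s ∨ φ s ∈ D) ∧ ∀ s ∈ S ∩ T, φ s ∈ D) ?_ ?_ ?_ ?_
    · exact ⟨id, continuous_id, fun _ h => h, fun _ _ => rfl, fun _ _ => Or.inl rfl, by simp⟩
    · rintro T T' hTT' ⟨φ, h1, h2, h3, h4, h5⟩
      exact ⟨φ, h1, h2, h3, h4, fun s hs => h5 s ⟨hs.1, hTT' hs.2⟩⟩
    · rintro T T' ⟨φ, h1, h2, h3, h4, h5⟩ ⟨ψ, g1, g2, g3, g4, g5⟩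
      refine ⟨ψ ∘ φ, g1.comp h1, fun z hz => g2 _ (h2 z hz), fun z hz => ?_, fun s hs => ?_, ?_⟩
      · rw [Function.comp_apply, h3 z hz, g3 z hz]
      · rcases h4 s hs with h | h
        · rw [Function.comp_apply, h]
          exact g4 s hs
        · exact Or.inr (g2 _ h)
      · rintro s ⟨hs, hT | hT'⟩
        · exact g2 _ (h5 s ⟨hs, hT⟩)
        · rcases h4 s hs with h | h
          · rw [Function.comp_apply, h]
            exact g5 s ⟨hs, hT'⟩
          · exact g2 _ h
    · intro x hx
      obtain ⟨j, hj, ⟨y₀, rfl⟩, hjS⟩ := hflat.exists_chart hx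
      obtain ⟨σ, hσ, hjD⟩ := exists_sign hD hD' hne hj hjS (hSD hx) (hSD' hx)
      obtain ⟨φ, h1, h2, h3, h4, V, hV, h5⟩ :=
        exists_local_push hj hjS hσ hjD hC (y₀ := y₀) fun h => hCS h hx
      exact ⟨V, mem_nhdsWithin_of_mem_nhds hV, φ, h1, h2, h3, h4, h5⟩
  obtain ⟨φ, h1, h2, h3, -, h5⟩ := key
  exact ⟨φ, h1, fun z hz => hz.elim (h2 z) fun hs => h5 z ⟨hs, hs⟩, h3⟩

/-! ### Contracting loops in a component -/

lemma simplyConnectedSpace_component [T2Space M] [ConnectedSpace M] [SimplyConnectedSpace M]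
    [LocallyPathConnectedSpace M] {D' : Set M} (hS : IsCompact S) (e : S ≃ₜ sphere (0 : E3) 1)
    (hflat : IsLocallyFlat 3 S)
    (hD : ∃ x ∈ Sᶜ, D = connectedComponentIn Sᶜ x)
    (hD' : ∃ x ∈ Sᶜ, D' = connectedComponentIn Sᶜ x) (hne : D ≠ D')
    (htwo : ∀ x ∈ Sᶜ, connectedComponentIn Sᶜ x = D ∨ connectedComponentIn Sᶜ x = D') :
    SimplyConnectedSpace D := by
  have hSc := hS.isClosed
  have hSconn : IsConnected S := by
    have h1 : IsConnected (sphere (0 : E3) 1) := isConnected_sphere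
      (by rw [← Module.finrank_eq_rank]; simp) 0 zero_le_one
    have := isConnected_iff_connectedSpace.mp h1
    exact isConnected_iff_connectedSpace.mpr (e.symm.surjective.connectedSpace e.symm.continuous)
  have hSD := sphere_subset_closure hSc hSconn hflat hD
  have hSD' := sphere_subset_closure hSc hSconn hflat hD'
  have hDsub : D ⊆ Sᶜ := by
    obtain ⟨x, -, rfl⟩ := hD
    exact connectedComponentIn_subset _ _
  have hDo : IsOpen D := by
    obtain ⟨x, -, rfl⟩ := hD
    exact hSc.isOpen_compl.connectedComponentIn
  have hDS : IsClosed (D ∪ S) := by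
    have h1 : D ∪ S = D'ᶜ := by
      ext z
      constructor
      · rintro (hz | hz) hz'
        · exact Set.disjoint_left.mp (disjoint_components hD hD' hne) hz hz'
        · obtain ⟨x, -, rfl⟩ := hD'
          exact connectedComponentIn_subset _ _ hz' hz
      · intro hz
        by_cases hzS : z ∈ S
        · exact Or.inr hzS
        · rcases htwo z hzS with h | h
          · exact Or.inl (h ▸ mem_connectedComponentIn hzS)
          · exact absurd (h ▸ mem_connectedComponentIn hzS) hz
    rw [h1]
    obtain ⟨x, -, rfl⟩ := hD'
    exact hSc.isOpen_compl.connectedComponentIn.isClosed_compl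
  have hDconn : IsConnected D := by
    obtain ⟨x, hx, rfl⟩ := hD
    exact isConnected_connectedComponentIn_iff.mpr hx
  rw [simply_connected_iff_loops_nullhomotopic]
  refine ⟨isPathConnected_iff_pathConnectedSpace.mp
    (hDo.isConnected_iff_isPathConnected.mp hDconn), fun x γ => ?_⟩
  obtain ⟨H⟩ := SimplyConnectedSpace.paths_homotopic
    (γ.map continuous_subtype_val) (Path.refl (x : M))
  obtain ⟨H', hH', hH'mem, hH'eq⟩ := exists_map_into_union hSc e hDo hDS H H.continuous
  have hCD : range (fun t => (γ t : M)) ⊆ D := by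
    rintro _ ⟨t, rfl⟩
    exact (γ t).2
  obtain ⟨φ, hφ, hφD, hφC⟩ := exists_push hS hflat hD hD' hne hSD hSD'
    (isCompact_range (continuous_subtype_val.comp γ.continuous)).isClosed (hCD.trans hDsub)
  -- Wherever `H` takes a value on the loop, in particular on the boundary, it is not changed.
  have hkeep : ∀ z t, H z = γ t → φ (H' z) = γ t := fun z t h => by
    rw [hH'eq z (h ▸ (γ t).2), h]
    exact hφC _ ⟨t, rfl⟩
  have hx0 : ((γ 0 : D) : M) = x := by simp
  refine ⟨{ toFun := fun z => ⟨φ (H' z), hφD _ (hH'mem z)⟩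
            continuous_toFun := (hφ.comp hH').subtype_mk _
            map_zero_left := fun t => Subtype.ext (hkeep _ t (by simp))
            map_one_left := fun t => Subtype.ext ?_
            prop' := fun s t ht => Subtype.ext ?_ }⟩
  · exact (hkeep _ 0 (by simp)).trans hx0
  · rcases ht with rfl | rfl
    · exact hkeep _ 0 (by simp)
    · exact hkeep _ 1 (by simp)

end Component

/-- If a locally flat embedded 2-sphere `S` in a connected, simply connected topological
3-manifold `M` separates `M` into exactly two connected components `D` and `D'`, then
each of `D` and `D'` is simply connected. -/
theorem components_of_sphere_complement_simply_connected
    (M : Type*) [TopologicalSpace M] [T2Space M] [SecondCountableTopology M]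
    (hM : IsLocEuclidean 3 M) [ConnectedSpace M] [SimplyConnectedSpace M]
    (S : Set M) (hScpt : IsCompact S)
    (hShomeo : Nonempty (S ≃ₜ Metric.sphere (0 : EuclideanSpace ℝ (Fin 3)) 1))
    (hSflat : IsLocallyFlat 3 S)
    (D D' : Set M)
    (hD : ∃ x ∈ Sᶜ, D = connectedComponentIn Sᶜ x)
    (hD' : ∃ x ∈ Sᶜ, D' = connectedComponentIn Sᶜ x)
    (hne : D ≠ D')
    (htwo : ∀ x ∈ Sᶜ, connectedComponentIn Sᶜ x = D ∨ connectedComponentIn Sᶜ x = D') :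
    SimplyConnectedSpace ↥D ∧ SimplyConnectedSpace ↥D' := by
  have := hM.locallyPathConnectedSpace_s1
  obtain ⟨e⟩ := hShomeo
  exact ⟨simplyConnectedSpace_component hScpt e hSflat hD hD' hne htwo,
    simplyConnectedSpace_component hScpt e hSflat hD' hD hne.symm
      fun x hx => (htwo x hx).symm⟩
end
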